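/- For any two distinct i-faces F and F' of a connected abstract simplicial complex K with weight function w, the limit lim_{ε→0+} κ_ε(F, F')/ε exists (the function ε ↦ κ_ε(F, F')/ε is monotone and bounded on (0, 1)). -/

import Mathlib

/-!
Write `f ε = W(m_F^ε, m_{F'}^ε)` and `d = d(F, F')`. The measure `m_F^{tε}` is the mixture
`t m_F^ε + (1 - t) δ_F`, so mixing a coupling at `ε` with the Dirac mass at `(F, F')` gives a
coupling at `tε`, whence `f (tε) ≤ t f ε + (1 - t) d` (`Wass_mul_le`). This says exactly that
`κ_ε / ε = (d - f ε) / (d ε)` is antitone in `ε` on `(0, 1)`.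

It is also bounded above: both measures keep mass at least `1 - ε` at their centres, so every
coupling has mass at least `1 - 2ε` at `(F, F')` and `f ε ≥ (1 - 2ε) d` (`le_Wass`), that is
`κ_ε / ε ≤ 2`. An antitone function bounded above has a right limit at the left endpoint.

Both estimates rely on couplings existing, i.e. on `m_F^ε` having total mass one (`sum_pm`),
which follows from the uniform description of `m_F^ε` in `pm_eq`.
-/


open Finset Filter

namespace SCRicci

variable {V : Type*}

/-- `K` is an abstract simplicial complex: faces are nonempty finite sets and
nonempty subsets of faces are again faces. -/
def IsComplex [DecidableEq V] (K : Finset (Finset V)) : Prop :=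
  ∀ F ∈ K, F.Nonempty ∧ ∀ E : Finset V, E ⊆ F → E.Nonempty → E ∈ K

/-- The set `S_i(K)` of `i`-faces of `K` (faces of cardinality `i+1`). -/
def faces [DecidableEq V] (K : Finset (Finset V)) (i : ℕ) : Finset (Finset V) :=
  K.filter fun F => F.card = i + 1

/-- Two `i`-faces are connected, `F ~ F'`, if they are distinct and share a common
`(i-1)`-face, which is necessarily `F ∩ F'`. -/
def Conn [DecidableEq V] (i : ℕ) (F F' : Finset V) : Prop :=
  F ≠ F' ∧ (F ∩ F').card = i

noncomputable section

/-- The degree of an `(i-1)`-face `E`: the sum of the weights of the `i`-faces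
containing `E`. -/
def deg [DecidableEq V] (K : Finset (Finset V)) (w : Finset V → ℝ) (i : ℕ)
    (E : Finset V) : ℝ :=
  ∑ F ∈ faces K i, if E ⊆ F then w F else 0

/-- `Chain K i n F F'`: there is a path of length `n` of consecutively connected
`i`-faces from `F` to `F'`. -/
def Chain [DecidableEq V] (K : Finset (Finset V)) (i : ℕ) :
    ℕ → Finset V → Finset V → Prop
  | 0, F, F' => F = F'
  | n + 1, F, F' => ∃ G ∈ faces K i, Conn i F G ∧ Chain K i n G F'

/-- The distance between two `i`-faces: the length of a shortest path of
consecutively connected `i`-faces. -/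
def fdist [DecidableEq V] (K : Finset (Finset V)) (i : ℕ) (F F' : Finset V) : ℕ :=
  sInf {n | Chain K i n F F'}

/-- `K` is connected in dimension `i`: any two `i`-faces are joined by a path of
consecutively connected `i`-faces. -/
def ComplexConnected [DecidableEq V] (K : Finset (Finset V)) (i : ℕ) : Prop :=
  ∀ F ∈ faces K i, ∀ F' ∈ faces K i, ∃ n, Chain K i n F F'

/-- The probability measure `m_F^ε` on the `i`-faces of `K`. -/
def pm [DecidableEq V] (K : Finset (Finset V)) (w : Finset V → ℝ) (i : ℕ) (ε : ℝ)
    (F F' : Finset V) : ℝ :=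
  if F' = F then
    1 - ε + ε / ((i : ℝ) + 1) * ∑ E ∈ F.powersetCard i, w F / deg K w i E
  else if F' ∈ faces K i ∧ (F ∩ F').card = i then
    ε * w F' / (((i : ℝ) + 1) * deg K w i (F ∩ F'))
  else 0

/-- The 1-Wasserstein distance between two measures on the `i`-faces of `K`:
the infimum of the transport cost over all couplings. -/
def Wass [DecidableEq V] (K : Finset (Finset V)) (i : ℕ) (μ ν : Finset V → ℝ) : ℝ :=
  sInf {c : ℝ | ∃ A : Finset V → Finset V → ℝ,
    (∀ F₁ F₂, 0 ≤ A F₁ F₂) ∧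
    (∀ F₁ ∈ faces K i, ∑ F₂ ∈ faces K i, A F₁ F₂ = μ F₁) ∧
    (∀ F₂ ∈ faces K i, ∑ F₁ ∈ faces K i, A F₁ F₂ = ν F₂) ∧
    c = ∑ F₁ ∈ faces K i, ∑ F₂ ∈ faces K i, A F₁ F₂ * (fdist K i F₁ F₂ : ℝ)}

/-- The `ε`-Ricci curvature of two distinct `i`-faces:
`κ_ε(F, F') = 1 - W(m_F^ε, m_{F'}^ε) / d(F, F')`. -/
def kappaEps [DecidableEq V] (K : Finset (Finset V)) (w : Finset V → ℝ) (i : ℕ)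
    (ε : ℝ) (F F' : Finset V) : ℝ :=
  1 - Wass K i (pm K w i ε F) (pm K w i ε F') / (fdist K i F F' : ℝ)

/-- The Ricci curvature `κ(F, F')`: the limit of `κ_ε(F, F') / ε` as `ε → 0+`. -/
def ricci [DecidableEq V] (K : Finset (Finset V)) (w : Finset V → ℝ) (i : ℕ)
    (F F' : Finset V) : ℝ :=
  limUnder (nhdsWithin (0 : ℝ) (Set.Ioi 0)) fun ε => kappaEps K w i ε F F' / ε

lemma mem_faces [DecidableEq V] {K : Finset (Finset V)} {i : ℕ} {F : Finset V} :
    F ∈ faces K i ↔ F ∈ K ∧ F.card = i + 1 := by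
  simp [faces]

lemma deg_nonneg [DecidableEq V] {K : Finset (Finset V)} {w : Finset V → ℝ}
    (hw : ∀ F ∈ K, 0 < w F) (i : ℕ) (E : Finset V) : 0 ≤ deg K w i E := by
  refine Finset.sum_nonneg fun G hG => ?_
  split_ifs
  · exact (hw G (mem_faces.1 hG).1).le
  · exact le_rfl

lemma deg_pos [DecidableEq V] {K : Finset (Finset V)} {w : Finset V → ℝ}
    (hw : ∀ F ∈ K, 0 < w F) {i : ℕ} {E F : Finset V} (hF : F ∈ faces K i)
    (hE : E ⊆ F) : 0 < deg K w i E := by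
  refine Finset.sum_pos' (fun G hG => ?_) ⟨F, hF, ?_⟩
  · split_ifs
    · exact (hw G (mem_faces.1 hG).1).le
    · exact le_rfl
  · rw [if_pos hE]
    exact hw F (mem_faces.1 hF).1

/-- A uniform formula for `m_F^ε`: stay put with probability `1 - ε`, otherwise choose one of
the `i + 1` boundary faces `E` uniformly and jump to a coface of `E` with probability
proportional to its weight. -/
lemma pm_eq [DecidableEq V] {K : Finset (Finset V)} (w : Finset V → ℝ) {i : ℕ} (ε : ℝ)
    {F G : Finset V} (hF : F ∈ faces K i) (hG : G ∈ faces K i) :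
    pm K w i ε F G = (1 - ε) * (if G = F then 1 else 0) + ε / ((i : ℝ) + 1) *
      ∑ E ∈ F.powersetCard i, (if E ⊆ G then w G else 0) / deg K w i E := by
  have hFc := (mem_faces.1 hF).2
  have hGc := (mem_faces.1 hG).2
  unfold pm
  by_cases h : G = F
  · subst h
    rw [if_pos rfl, if_pos rfl, mul_one]
    congr 2
    refine Finset.sum_congr rfl fun E hE => ?_
    rw [if_pos (Finset.mem_powersetCard.1 hE).1]
  · rw [if_neg h, if_neg h, mul_zero, zero_add]
    have hlt : (F ∩ G).card < i + 1 := by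
      rw [← hFc]
      refine Finset.card_lt_card ⟨Finset.inter_subset_left, fun hsub => h ?_⟩
      exact (Finset.eq_of_subset_of_card_le (fun x hx => (Finset.mem_inter.1 (hsub hx)).2)
        (by omega)).symm
    -- An `i`-element subset of both faces can only be their intersection.
    have huniq : ∀ E ∈ F.powersetCard i, E ⊆ G → E = F ∩ G := fun E hE hEG => by
      obtain ⟨hEF, hEc⟩ := Finset.mem_powersetCard.1 hE
      exact Finset.eq_of_subset_of_card_le (Finset.subset_inter hEF hEG) (by omega)
    by_cases hc : (F ∩ G).card = i
    · rw [if_pos ⟨hG, hc⟩, Finset.sum_eq_single (F ∩ G)]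
      · rw [if_pos Finset.inter_subset_right, div_mul_div_comm]
      · intro E hE hne
        rw [if_neg fun hEG => hne (huniq E hE hEG), zero_div]
      · intro hn
        exact absurd (Finset.mem_powersetCard.2 ⟨Finset.inter_subset_left, hc⟩) hn
    · rw [if_neg fun hh => hc hh.2, Finset.sum_eq_zero, mul_zero]
      intro E hE
      rw [if_neg, zero_div]
      intro hEG
      apply hc
      rw [← huniq E hE hEG]
      exact (Finset.mem_powersetCard.1 hE).2

lemma sum_pm [DecidableEq V] {K : Finset (Finset V)} {w : Finset V → ℝ}
    (hw : ∀ F ∈ K, 0 < w F) {i : ℕ} (ε : ℝ) {F : Finset V} (hF : F ∈ faces K i) :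
    ∑ G ∈ faces K i, pm K w i ε F G = 1 := by
  rw [Finset.sum_congr rfl fun G hG => pm_eq w ε hF hG, Finset.sum_add_distrib,
    ← Finset.mul_sum, ← Finset.mul_sum, Finset.sum_comm]
  have h1 : ∑ E ∈ F.powersetCard i, ∑ G ∈ faces K i,
      (if E ⊆ G then w G else 0) / deg K w i E = (i : ℝ) + 1 := by
    have : ∀ E ∈ F.powersetCard i, ∑ G ∈ faces K i,
        (if E ⊆ G then w G else 0) / deg K w i E = 1 := fun E hE => by
      rw [← Finset.sum_div]
      exact div_self (deg_pos hw hF (Finset.mem_powersetCard.1 hE).1).ne'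
    rw [Finset.sum_congr rfl this]
    simp [Finset.card_powersetCard, (mem_faces.1 hF).2]
  have h2 : (i : ℝ) + 1 ≠ 0 := by positivity
  rw [h1, Finset.sum_ite_eq' (faces K i) F, if_pos hF, div_mul_cancel₀ _ h2]
  ring

lemma one_sub_le_pm_self [DecidableEq V] {K : Finset (Finset V)} {w : Finset V → ℝ}
    (hw : ∀ F ∈ K, 0 < w F) {i : ℕ} {ε : ℝ} (h0 : 0 ≤ ε) {F : Finset V}
    (hF : F ∈ faces K i) : 1 - ε ≤ pm K w i ε F F := by
  unfold pm
  rw [if_pos rfl, le_add_iff_nonneg_right]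
  exact mul_nonneg (by positivity) (Finset.sum_nonneg fun E _ =>
    div_nonneg (hw F (mem_faces.1 hF).1).le (deg_nonneg hw i E))

lemma pm_nonneg [DecidableEq V] {K : Finset (Finset V)} {w : Finset V → ℝ}
    (hw : ∀ F ∈ K, 0 < w F) {i : ℕ} {ε : ℝ} (h0 : 0 ≤ ε) (h1 : ε ≤ 1) {F : Finset V}
    (hF : F ∈ faces K i) (G : Finset V) : 0 ≤ pm K w i ε F G := by
  by_cases h : G = F
  · subst h
    exact (sub_nonneg.2 h1).trans (one_sub_le_pm_self hw h0 hF)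
  · unfold pm
    rw [if_neg h]
    split_ifs with hG
    · exact div_nonneg (mul_nonneg h0 (hw G (mem_faces.1 hG.1).1).le)
        (mul_nonneg (by positivity) (deg_nonneg hw i _))
    · exact le_rfl

/-- `m_F^{tε}` is the convex combination of `m_F^ε` and the Dirac mass at `F`. -/
lemma pm_mul [DecidableEq V] (K : Finset (Finset V)) (w : Finset V → ℝ) (i : ℕ) (t ε : ℝ)
    (F G : Finset V) :
    pm K w i (t * ε) F G = t * pm K w i ε F G + (1 - t) * (if G = F then 1 else 0) := by
  unfold pm
  split_ifs <;> ring

/-- The set of transport costs of couplings of `μ` and `ν`, whose infimum is `Wass K i μ ν`. -/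
def costs [DecidableEq V] (K : Finset (Finset V)) (i : ℕ) (μ ν : Finset V → ℝ) : Set ℝ :=
  {c : ℝ | ∃ A : Finset V → Finset V → ℝ,
    (∀ F₁ F₂, 0 ≤ A F₁ F₂) ∧
    (∀ F₁ ∈ faces K i, ∑ F₂ ∈ faces K i, A F₁ F₂ = μ F₁) ∧
    (∀ F₂ ∈ faces K i, ∑ F₁ ∈ faces K i, A F₁ F₂ = ν F₂) ∧
    c = ∑ F₁ ∈ faces K i, ∑ F₂ ∈ faces K i, A F₁ F₂ * (fdist K i F₁ F₂ : ℝ)}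

lemma Wass_eq_sInf_costs [DecidableEq V] (K : Finset (Finset V)) (i : ℕ)
    (μ ν : Finset V → ℝ) : Wass K i μ ν = sInf (costs K i μ ν) := rfl

lemma costs_bddBelow [DecidableEq V] (K : Finset (Finset V)) (i : ℕ) (μ ν : Finset V → ℝ) :
    BddBelow (costs K i μ ν) := by
  refine ⟨0, ?_⟩
  rintro c ⟨A, hA, -, -, rfl⟩
  exact Finset.sum_nonneg fun _ _ => Finset.sum_nonneg fun _ _ =>
    mul_nonneg (hA _ _) (Nat.cast_nonneg _)

/-- The product coupling witnesses that the infimum defining `Wass` is over a nonempty set. -/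
lemma costs_nonempty [DecidableEq V] {K : Finset (Finset V)} {i : ℕ} {μ ν : Finset V → ℝ}
    (hμ : ∀ G, 0 ≤ μ G) (hν : ∀ G, 0 ≤ ν G) (hμ1 : ∑ G ∈ faces K i, μ G = 1)
    (hν1 : ∑ G ∈ faces K i, ν G = 1) : (costs K i μ ν).Nonempty := by
  refine ⟨_, fun G H => μ G * ν H, fun G H => mul_nonneg (hμ G) (hν H), ?_, ?_, rfl⟩
  · intro G _
    rw [← Finset.mul_sum, hν1, mul_one]
  · intro G _
    rw [← Finset.sum_mul, hμ1, one_mul]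

/-- Mixing a coupling at time `ε` with the Dirac mass at `(F, F')` gives a coupling at time
`tε`: the transport cost is convex along segments issuing from `ε = 0`. -/
lemma Wass_mul_le [DecidableEq V] {K : Finset (Finset V)} {w : Finset V → ℝ}
    (hw : ∀ F ∈ K, 0 < w F) {i : ℕ} {t ε : ℝ} (ht : 0 ≤ t) (ht1 : t ≤ 1) (h0 : 0 ≤ ε)
    (h1 : ε ≤ 1) {F F' : Finset V} (hF : F ∈ faces K i) (hF' : F' ∈ faces K i) :
    Wass K i (pm K w i (t * ε) F) (pm K w i (t * ε) F') ≤
      t * Wass K i (pm K w i ε F) (pm K w i ε F') + (1 - t) * (fdist K i F F' : ℝ) := by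
  rw [← sub_le_iff_le_add]
  rw [Wass_eq_sInf_costs K i (pm K w i ε F), ← smul_eq_mul t (sInf _),
    ← Real.sInf_smul_of_nonneg ht]
  refine le_csInf ((costs_nonempty (pm_nonneg hw h0 h1 hF) (pm_nonneg hw h0 h1 hF')
    (sum_pm hw ε hF) (sum_pm hw ε hF')).smul_set) ?_
  rintro _ ⟨_, ⟨A, hA, hr, hc, rfl⟩, rfl⟩
  rw [sub_le_iff_le_add]
  refine csInf_le (costs_bddBelow _ _ _ _) ⟨fun G H => t * A G H + (1 - t) *
    ((if G = F then 1 else 0) * (if H = F' then 1 else 0)), ?_, ?_, ?_, ?_⟩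
  · intro G H
    have := hA G H
    have := sub_nonneg.2 ht1
    positivity
  · intro G hG
    rw [Finset.sum_add_distrib, ← Finset.mul_sum, ← Finset.mul_sum, ← Finset.mul_sum, hr G hG,
      Finset.sum_ite_eq' (faces K i) F', if_pos hF', mul_one, pm_mul]
  · intro H hH
    rw [Finset.sum_add_distrib, ← Finset.mul_sum, ← Finset.mul_sum, ← Finset.sum_mul, hc H hH,
      Finset.sum_ite_eq' (faces K i) F, if_pos hF, one_mul, pm_mul]
  · simp only [add_mul, Finset.sum_add_distrib, mul_assoc, ← Finset.mul_sum, ite_mul, one_mul,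
      zero_mul, smul_eq_mul]
    simp [Finset.sum_ite_eq', hF', hF]

/-- Since `m_F^ε` and `m_{F'}^ε` have mass at least `1 - ε` at `F` and `F'`, every coupling has
mass at least `1 - 2ε` at `(F, F')`. -/
lemma le_Wass [DecidableEq V] {K : Finset (Finset V)} {w : Finset V → ℝ}
    (hw : ∀ F ∈ K, 0 < w F) {i : ℕ} {ε : ℝ} (h0 : 0 ≤ ε)
    (h1 : ε ≤ 1) {F F' : Finset V} (hF : F ∈ faces K i) (hF' : F' ∈ faces K i) :
    (1 - 2 * ε) * (fdist K i F F' : ℝ) ≤ Wass K i (pm K w i ε F) (pm K w i ε F') := by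
  refine le_csInf (costs_nonempty (pm_nonneg hw h0 h1 hF) (pm_nonneg hw h0 h1 hF')
    (sum_pm hw ε hF) (sum_pm hw ε hF')) ?_
  rintro c ⟨A, hA, hr, hc, rfl⟩
  have hmass : 1 - 2 * ε ≤ A F F' := by
    have e1 : ∑ H ∈ (faces K i).erase F', A F H ≤
        ∑ H ∈ (faces K i).erase F', pm K w i ε F' H := by
      refine Finset.sum_le_sum fun H hH => ?_
      rw [← hc H (Finset.mem_of_mem_erase hH)]
      exact Finset.single_le_sum (f := fun G => A G H) (fun G _ => hA G H) hF
    have e2 := Finset.add_sum_erase (faces K i) (A F) hF'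
    have e3 := Finset.add_sum_erase (faces K i) (pm K w i ε F') hF'
    rw [hr F hF] at e2
    rw [sum_pm hw ε hF'] at e3
    linarith [one_sub_le_pm_self hw h0 hF, one_sub_le_pm_self hw h0 hF']
  have hnn : ∀ G H, 0 ≤ A G H * (fdist K i G H : ℝ) := fun G H =>
    mul_nonneg (hA G H) (Nat.cast_nonneg _)
  calc (1 - 2 * ε) * (fdist K i F F' : ℝ) ≤ A F F' * (fdist K i F F' : ℝ) := by gcongr
    _ ≤ ∑ H ∈ faces K i, A F H * (fdist K i F H : ℝ) :=
      Finset.single_le_sum (f := fun H => A F H * (fdist K i F H : ℝ)) (fun H _ => hnn F H) hF'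
    _ ≤ _ := Finset.single_le_sum
      (f := fun G => ∑ H ∈ faces K i, A G H * (fdist K i G H : ℝ))
      (fun G _ => Finset.sum_nonneg fun H _ => hnn G H) hF

lemma fdist_pos [DecidableEq V] {K : Finset (Finset V)} {i : ℕ}
    (hconn : ComplexConnected K i) {F F' : Finset V} (hF : F ∈ faces K i)
    (hF' : F' ∈ faces K i) (hne : F ≠ F') : 0 < fdist K i F F' := by
  refine Nat.pos_of_ne_zero fun h => hne ?_
  have hmem : Chain K i (fdist K i F F') F F' := Nat.sInf_mem (hconn F hF F' hF')
  rw [h] at hmem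
  exact hmem

/-- For any two distinct `i`-faces `F`, `F'` of a connected
abstract simplicial complex with (positive) weight function `w`, the limit
`lim_{ε→0+} κ_ε(F, F')/ε` exists. -/
theorem ricci_limit_exists {V : Type*} [Fintype V] [DecidableEq V]
    (K : Finset (Finset V)) (i : ℕ) (hi : 1 ≤ i)
    (hK : IsComplex K) (hconn : ComplexConnected K i)
    (w : Finset V → ℝ) (hwpos : ∀ F ∈ K, 0 < w F)
    (F F' : Finset V) (hF : F ∈ faces K i) (hF' : F' ∈ faces K i) (hne : F ≠ F') :
    ∃ L : ℝ, Filter.Tendsto (fun ε => kappaEps K w i ε F F' / ε)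
      (nhdsWithin (0 : ℝ) (Set.Ioi 0)) (nhds L) := by
  have hd : (0 : ℝ) < fdist K i F F' := Nat.cast_pos.2 (fdist_pos hconn hF hF' hne)
  have hanti : AntitoneOn (fun ε => kappaEps K w i ε F F' / ε) (Set.Ioo 0 1) := by
    intro a ha b hb hab
    have hb0 : 0 < b := hb.1
    have ha0 : 0 < a := ha.1
    have h := Wass_mul_le hwpos (t := a / b) (by positivity) ((div_le_one hb0).2 hab)
      hb0.le hb.2.le hF hF'
    rw [div_mul_cancel₀ _ hb0.ne'] at h
    simp only [kappaEps]
    rw [div_le_div_iff₀ hb0 ha0]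
    set Wa := Wass K i (pm K w i a F) (pm K w i a F')
    set Wb := Wass K i (pm K w i b F) (pm K w i b F')
    set d : ℝ := (fdist K i F F' : ℝ)
    have h2 : b * Wa ≤ a * Wb + (b - a) * d := by
      calc b * Wa ≤ b * (a / b * Wb + (1 - a / b) * d) := by gcongr
        _ = _ := by field_simp
    have h3 : b * (Wa / d) ≤ a * (Wb / d) + (b - a) := by
      calc b * (Wa / d) = (b * Wa) / d := by ring
        _ ≤ (a * Wb + (b - a) * d) / d := by gcongr
        _ = _ := by field_simp
    linarith
  have hbdd : BddAbove ((fun ε => kappaEps K w i ε F F' / ε) '' Set.Ioo 0 1) := by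
    refine ⟨2, ?_⟩
    rintro _ ⟨ε, hε, rfl⟩
    have h := le_Wass hwpos hε.1.le hε.2.le hF hF'
    have h2 := (le_div_iff₀ hd).2 h
    simp only [kappaEps]
    rw [div_le_iff₀ hε.1]
    linarith
  exact ⟨_, AntitoneOn.tendsto_nhdsWithin_Ioo_right (Set.nonempty_Ioo.2 zero_lt_one) hanti hbdd⟩

end
end SCRicci
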